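/- For every complex measure μ on ℝ^d of finite total variation without singular component and every ε > 0, there exists a complex measure ν_ε on ℝ^d of finite total variation without singular component such that ν̂_ε(y) = 1/μ̂(y) for every y with |μ̂(y)| ≥ ε, and ν̂_ε(y) = 0 for every y with |μ̂(y)| ≤ ε/2. -/

import Mathlib

open MeasureTheory Real Complex
open scoped RealInnerProductSpace FourierTransform

/-- The Fourier–Stieltjes transform of the measure `μ = f dx + Σ_n a_n δ_{γ_n}` on `ℝ^d`
(a measure of finite total variation without singular component):
`μ̂(y) = ∫ f(x) e^{-2πi⟨x,y⟩} dx + Σ_n a_n e^{-2πi⟨γ_n, y⟩}`. -/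
noncomputable def measureFourier {d : ℕ} (f : EuclideanSpace ℝ (Fin d) → ℂ)
    (a : ℕ → ℂ) (γ : ℕ → EuclideanSpace ℝ (Fin d)) (y : EuclideanSpace ℝ (Fin d)) : ℂ :=
  𝓕 f y + ∑' n : ℕ, a n * Complex.exp (-2 * π * Complex.I * (⟪γ n, y⟫ : ℝ))

namespace FourierStieltjes

variable {d : ℕ}

local notation "𝔼" => EuclideanSpace ℝ (Fin d)

/-- `F` is the Fourier–Stieltjes transform of a measure without singular component
whose total variation is at most `C`. -/
def IsTransform (F : EuclideanSpace ℝ (Fin d) → ℂ) (C : ℝ) : Prop :=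
  ∃ (g : EuclideanSpace ℝ (Fin d) → ℂ) (b : ℕ → ℂ) (ρ : ℕ → EuclideanSpace ℝ (Fin d)),
    Integrable g ∧ Summable (fun n => ‖b n‖) ∧ (∫ x, ‖g x‖) + ∑' n, ‖b n‖ ≤ C ∧
      ∀ y, F y = measureFourier g b ρ y

/-- The character `y ↦ e^{-2πi⟨γ, y⟩}`. -/
noncomputable def char (γ y : EuclideanSpace ℝ (Fin d)) : ℂ :=
  Complex.exp (-2 * π * Complex.I * (⟪γ, y⟫ : ℝ))

lemma char_eq_exp_mul_I (γ y : 𝔼) : char γ y = Complex.exp ((-2 * π * ⟪γ, y⟫ : ℝ) * Complex.I) := by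
  unfold char; congr 1; push_cast; ring

@[simp] lemma norm_char (γ y : 𝔼) : ‖char γ y‖ = 1 := by
  rw [char_eq_exp_mul_I, Complex.norm_exp_ofReal_mul_I]

lemma char_add (γ ρ y : 𝔼) : char (γ + ρ) y = char γ y * char ρ y := by
  unfold char; rw [← Complex.exp_add, inner_add_left]; push_cast; ring_nf

@[simp] lemma char_zero (y : 𝔼) : char 0 y = 1 := by simp [char]

lemma conj_char (γ y : 𝔼) : (starRingEnd ℂ) (char γ y) = char (-γ) y := by
  rw [char_eq_exp_mul_I, char_eq_exp_mul_I, ← Complex.exp_conj]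
  simp [Complex.conj_ofNat]

lemma measureFourier_eq (g : 𝔼 → ℂ) (b : ℕ → ℂ) (ρ : ℕ → 𝔼) (y : 𝔼) :
    measureFourier g b ρ y = 𝓕 g y + ∑' n, b n * char (ρ n) y := rfl

lemma fourier_eq_char (g : 𝔼 → ℂ) (y : 𝔼) : 𝓕 g y = ∫ x, char x y * g x := by
  rw [Real.fourier_eq']
  congr with x
  rw [char_eq_exp_mul_I]; rfl

lemma continuous_char (y : 𝔼) : Continuous fun x : 𝔼 => char x y := by
  unfold char; fun_prop

lemma summable_mul_char {ι : Type*} {b : ι → ℂ} (hb : Summable fun n => ‖b n‖) (ρ : ι → 𝔼) (y : 𝔼) :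
    Summable fun n => b n * char (ρ n) y :=
  Summable.of_norm (by simpa using hb)

lemma norm_fourier_le (g : 𝔼 → ℂ) (y : 𝔼) : ‖𝓕 g y‖ ≤ ∫ x, ‖g x‖ := by
  rw [fourier_eq_char]
  exact (norm_integral_le_integral_norm _).trans_eq (by simp)

lemma integrable_char_mul {g : 𝔼 → ℂ} (hg : Integrable g) (y : 𝔼) :
    Integrable fun x => char x y * g x :=
  hg.bdd_mul (c := 1) (continuous_char y).aestronglyMeasurable (.of_forall fun x => by simp)

lemma fourier_congr_ae {g g' : 𝔼 → ℂ} (h : g =ᵐ[volume] g') (y : 𝔼) : 𝓕 g y = 𝓕 g' y := by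
  rw [fourier_eq_char, fourier_eq_char]
  exact integral_congr_ae (h.mono fun x hx => by simp [hx])

/-- The value of the Fourier transform at `y`, as a continuous functional on `L¹`. -/
noncomputable def fourierAt (y : EuclideanSpace ℝ (Fin d)) :
    (EuclideanSpace ℝ (Fin d) →₁[volume] ℂ) →L[ℂ] ℂ :=
  LinearMap.mkContinuous
    { toFun := fun g => 𝓕 (g : EuclideanSpace ℝ (Fin d) → ℂ) y
      map_add' := fun g g' => by
        rw [fourier_congr_ae (Lp.coeFn_add g g')]
        simp only [fourier_eq_char, Pi.add_apply, mul_add]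
        exact integral_add (integrable_char_mul (L1.integrable_coeFn g) y)
          (integrable_char_mul (L1.integrable_coeFn g') y)
      map_smul' := fun c g => by
        rw [fourier_congr_ae (Lp.coeFn_smul c g)]
        simp only [fourier_eq_char, Pi.smul_apply, smul_eq_mul, RingHom.id_apply,
          mul_left_comm _ c]
        exact integral_const_mul _ _ }
    1 fun g => by
      rw [one_mul, L1.norm_eq_integral_norm]
      exact norm_fourier_le _ y

lemma fourierAt_apply (y : 𝔼) (g : 𝔼 →₁[volume] ℂ) : fourierAt y g = 𝓕 (g : 𝔼 → ℂ) y := rfl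

lemma fourierAt_toL1 {g : 𝔼 → ℂ} (hg : Integrable g) (y : 𝔼) : fourierAt y (hg.toL1 g) = 𝓕 g y :=
  fourier_congr_ae hg.coeFn_toL1 y

/-- A series that converges absolutely in `L¹` may be transformed termwise. -/
lemma exists_integrable_fourier_eq_tsum {ι : Type*} {g : ι → 𝔼 → ℂ} (hg : ∀ i, Integrable (g i))
    (hsum : Summable fun i => ∫ x, ‖g i x‖) :
    ∃ G : 𝔼 → ℂ, Integrable G ∧ ∫ x, ‖G x‖ ≤ ∑' i, ∫ x, ‖g i x‖ ∧
      ∀ y, 𝓕 G y = ∑' i, 𝓕 (g i) y := by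
  have hL : Summable fun i => ‖(hg i).toL1 (g i)‖ := by
    simpa only [L1.norm_of_fun_eq_integral_norm] using hsum
  refine ⟨(∑' i, (hg i).toL1 (g i) : 𝔼 →₁[volume] ℂ), L1.integrable_coeFn _, ?_, fun y => ?_⟩
  · rw [← L1.norm_eq_integral_norm]
    simpa only [L1.norm_of_fun_eq_integral_norm] using norm_tsum_le_tsum_norm hL
  · rw [← fourierAt_apply, (fourierAt y).map_tsum hL.of_norm]
    simp only [fourierAt_toL1]

namespace IsTransform

variable {F G : EuclideanSpace ℝ (Fin d) → ℂ} {C D : ℝ}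

lemma mono (hF : IsTransform F C) (h : C ≤ D) : IsTransform F D := by
  obtain ⟨g, b, ρ, hg, hb, hC, hy⟩ := hF
  exact ⟨g, b, ρ, hg, hb, hC.trans h, hy⟩

lemma norm_le (hF : IsTransform F C) (y : 𝔼) : ‖F y‖ ≤ C := by
  obtain ⟨g, b, ρ, hg, hb, hC, hy⟩ := hF
  rw [hy, measureFourier_eq]
  refine (norm_add_le _ _).trans (le_trans (add_le_add (norm_fourier_le g y) ?_) hC)
  exact (norm_tsum_le_tsum_norm (by simpa using hb)).trans_eq (by simp)

lemma nonneg (hF : IsTransform F C) : 0 ≤ C := (norm_nonneg _).trans (hF.norm_le 0)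

lemma fourier {g : 𝔼 → ℂ} (hg : Integrable g) : IsTransform (𝓕 g) (∫ x, ‖g x‖) :=
  ⟨g, 0, 0, hg, by simp [summable_zero], by simp, fun y => by simp [measureFourier]⟩

lemma tsum_apply {ι : Type*} [Countable ι] [Nonempty ι] {F : ι → 𝔼 → ℂ} {C : ι → ℝ}
    (hF : ∀ i, IsTransform (F i) (C i)) (hC : Summable C) :
    IsTransform (fun y => ∑' i, F i y) (∑' i, C i) := by
  have hC0 i := (hF i).nonneg
  choose g b ρ hg hb hgb hy using hF
  have hbn i : 0 ≤ ∑' n, ‖b i n‖ := tsum_nonneg fun n => norm_nonneg _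
  have hgn i : 0 ≤ ∫ x, ‖g i x‖ := integral_nonneg fun x => norm_nonneg _
  have hsg : Summable fun i => ∫ x, ‖g i x‖ :=
    hC.of_nonneg_of_le hgn fun i => by linarith [hbn i, hgb i]
  have hsb : Summable fun i => ∑' n, ‖b i n‖ :=
    hC.of_nonneg_of_le hbn fun i => by linarith [hgn i, hgb i]
  have hprod : Summable fun p : ι × ℕ => ‖b p.1 p.2‖ :=
    (summable_prod_of_nonneg fun p => norm_nonneg _).2 ⟨hb, hsb⟩
  obtain ⟨e⟩ : Nonempty (ℕ ≃ ι × ℕ) :=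
    (nonempty_denumerable (ι × ℕ)).map fun h => (@Denumerable.eqv _ h).symm
  obtain ⟨G, hG, hGle, hGy⟩ := exists_integrable_fourier_eq_tsum hg hsg
  have hchar y : Summable fun p : ι × ℕ => b p.1 p.2 * char (ρ p.1 p.2) y :=
    summable_mul_char hprod (fun p => ρ p.1 p.2) y
  refine ⟨G, fun n => b (e n).1 (e n).2, fun n => ρ (e n).1 (e n).2, hG,
    hprod.comp_injective e.injective, ?_, fun y => ?_⟩
  · rw [e.tsum_eq (fun p => ‖b p.1 p.2‖), hprod.tsum_prod]
    refine (add_le_add_left hGle _).trans ?_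
    rw [← hsg.tsum_add hsb]
    exact (hsg.add hsb).tsum_le_tsum hgb hC
  · have h2 : Summable fun i => 𝓕 (g i) y :=
      Summable.of_norm_bounded hsg fun i => norm_fourier_le _ y
    rw [measureFourier_eq, hGy,
      e.tsum_eq (fun p => b p.1 p.2 * FourierStieltjes.char (ρ p.1 p.2) y),
      (hchar y).tsum_prod, ← h2.tsum_add (hchar y).prod]
    simp only [hy, measureFourier_eq]

lemma add (hF : IsTransform F C) (hG : IsTransform G D) :
    IsTransform (fun y => F y + G y) (C + D) := by
  have := tsum_apply (F := fun i : Bool => cond i F G) (C := fun i : Bool => cond i C D)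
    (by rintro (_ | _) <;> assumption) (Summable.of_finite)
  simp only [tsum_bool] at this
  simpa [add_comm] using this

lemma const_mul (hF : IsTransform F C) (c : ℂ) : IsTransform (fun y => c * F y) (‖c‖ * C) := by
  obtain ⟨g, b, ρ, hg, hb, hC, hy⟩ := hF
  refine ⟨fun x => c * g x, fun n => c * b n, ρ, hg.const_mul c, by simpa using hb.mul_left ‖c‖,
    ?_, fun y => ?_⟩
  · simp only [norm_mul, integral_const_mul, tsum_mul_left, ← mul_add]
    gcongr
  · beta_reduce
    rw [hy, measureFourier_eq, measureFourier_eq, fourier_eq_char, fourier_eq_char]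
    simp only [mul_left_comm _ c, integral_const_mul, mul_assoc c, tsum_mul_left, mul_add]

lemma conj (hF : IsTransform F C) : IsTransform (fun y => (starRingEnd ℂ) (F y)) C := by
  obtain ⟨g, b, ρ, hg, hb, hC, hy⟩ := hF
  refine ⟨fun x => (starRingEnd ℂ) (g (-x)), fun n => (starRingEnd ℂ) (b n), fun n => -ρ n,
    ?_, by simpa using hb, ?_, fun y => ?_⟩
  · exact (LinearIsometryEquiv.integrable_comp_iff Complex.conjLIE).2 hg.comp_neg
  · simpa [integral_neg_eq_self fun x => ‖g x‖] using hC
  · beta_reduce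
    rw [hy, measureFourier_eq, measureFourier_eq, map_add, fourier_eq_char, fourier_eq_char,
      ← integral_conj, Complex.conj_tsum]
    simp only [map_mul, conj_char]
    rw [← integral_neg_eq_self]
    simp

lemma char_mul (hF : IsTransform F C) (γ : 𝔼) : IsTransform (fun y => char γ y * F y) C := by
  obtain ⟨g, b, ρ, hg, hb, hC, hy⟩ := hF
  refine ⟨fun x => g (x - γ), b, fun n => γ + ρ n, hg.comp_sub_right γ, hb, ?_, fun y => ?_⟩
  · rwa [integral_sub_right_eq_self fun x => ‖g x‖]
  · beta_reduce
    rw [hy, measureFourier_eq, measureFourier_eq, fourier_eq_char, fourier_eq_char, mul_add,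
      ← integral_const_mul, ← tsum_mul_left]
    congr 1
    · rw [← integral_sub_right_eq_self _ γ]
      congr with x
      rw [← mul_assoc, ← char_add, add_sub_cancel]
    · congr with n
      rw [char_add]; ring

lemma one : IsTransform (fun _ : 𝔼 => (1 : ℂ)) 1 := by
  refine ⟨0, Pi.single 0 1, 0, integrable_zero _ _ _, ?_, ?_, fun y => ?_⟩
  · exact summable_of_ne_finset_zero (s := {0}) fun n hn => by simp_all
  · rw [tsum_eq_single 0 fun n hn => by simp [hn]]; simp
  · rw [measureFourier_eq, tsum_eq_single 0 fun n hn => by simp [hn], fourier_eq_char]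
    simp

lemma char (γ : 𝔼) : IsTransform (FourierStieltjes.char γ) 1 := by
  simpa using one.char_mul γ

lemma fourier_mul_fourier {g g' : 𝔼 → ℂ} (hg : Integrable g) (hg' : Integrable g') :
    IsTransform (fun y => 𝓕 g y * 𝓕 g' y) ((∫ x, ‖g x‖) * ∫ x, ‖g' x‖) := by
  have h := fourier (hg.integrable_convolution (ContinuousLinearMap.mul ℂ ℂ) hg')
  have h2 := (hg.norm.integrable_convolution (ContinuousLinearMap.mul ℝ ℝ) hg'.norm)
  have h1 := integral_convolution (ContinuousLinearMap.mul ℝ ℝ) hg.norm hg'.norm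
  simp only [ContinuousLinearMap.mul_apply'] at h1
  rw [← h1]
  refine (funext (Real.fourier_mul_convolution_eq hg hg') ▸ h).mono ?_
  refine integral_mono_of_nonneg (.of_forall fun x => norm_nonneg _) h2 (.of_forall fun x => ?_)
  simp only [convolution, ContinuousLinearMap.mul_apply']
  exact (norm_integral_le_integral_norm _).trans_eq (by simp)

lemma tsum_char_mul (hF : IsTransform F C) {b : ℕ → ℂ} (hb : Summable fun n => ‖b n‖)
    (ρ : ℕ → 𝔼) :
    IsTransform (fun y => (∑' n, b n * FourierStieltjes.char (ρ n) y) * F y)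
      ((∑' n, ‖b n‖) * C) := by
  have := tsum_apply (fun n => (hF.char_mul (ρ n)).const_mul (b n)) (hb.mul_right C)
  simpa only [← tsum_mul_right, mul_assoc] using this

lemma fourier_mul (hF : IsTransform F C) {g : 𝔼 → ℂ} (hg : Integrable g) :
    IsTransform (fun y => 𝓕 g y * F y) ((∫ x, ‖g x‖) * C) := by
  obtain ⟨g', b, ρ, hg', hb, hC, hy⟩ := hF
  have := (fourier_mul_fourier hg hg').add ((fourier hg).tsum_char_mul hb ρ)
  convert this.mono ?_ using 2 with y
  · rw [hy, measureFourier_eq]; ring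
  · rw [mul_comm (∑' n, ‖b n‖), ← mul_add]
    gcongr

lemma mul (hF : IsTransform F C) (hG : IsTransform G D) :
    IsTransform (fun y => F y * G y) (C * D) := by
  have hD := hG.nonneg
  obtain ⟨g, b, ρ, hg, hb, hC, hy⟩ := hF
  convert ((hG.fourier_mul hg).add (hG.tsum_char_mul hb ρ)).mono ?_ using 2 with y
  · rw [hy, measureFourier_eq]; ring
  · rw [← add_mul]
    gcongr

lemma pow (hF : IsTransform F C) (n : ℕ) : IsTransform (fun y => F y ^ n) (C ^ n) := by
  induction n with
  | zero => simpa using one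
  | succ n ih => simpa only [pow_succ] using ih.mul hF

lemma re (hF : IsTransform F C) : IsTransform (fun y => ((F y).re : ℂ)) C := by
  have := (hF.add hF.conj).const_mul (1 / 2)
  convert this using 2 with y
  · rw [Complex.add_conj]; push_cast; ring
  · norm_num; ring

end IsTransform

open scoped SchwartzMap ContDiff

section TameFamily

variable {V W ι : Type*} [NormedAddCommGroup V] [InnerProductSpace ℝ V]
  [NormedAddCommGroup W] [NormedSpace ℂ W] {σ B : ι → ℝ}

/-- A family of Schwartz functions each of whose seminorms is bounded by a polynomial in `σ i`
times `B i`. -/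
structure IsTame (σ B : ι → ℝ) (v : ι → V → W) : Prop where
  contDiff : ∀ i, ContDiff ℝ ∞ (v i)
  decay : ∀ k j : ℕ, ∃ (C : ℝ) (J : ℕ), 0 ≤ C ∧
    ∀ i x, ‖x‖ ^ k * ‖iteratedFDeriv ℝ j (v i) x‖ ≤ C * σ i ^ J * B i

lemma IsTame.exists_schwartzMap {v : ι → V → W} (hv : IsTame σ B v) (i : ι) :
    ∃ φ : 𝓢(V, W), ⇑φ = v i :=
  ⟨⟨v i, hv.contDiff i, fun k j => by
    obtain ⟨C, J, -, h⟩ := hv.decay k j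
    exact ⟨_, h i⟩⟩, rfl⟩

lemma IsTame.fourier_decay [FiniteDimensional ℝ V] [MeasurableSpace V] [BorelSpace V]
    (hσ : ∀ i, 1 ≤ σ i) (hB : ∀ i, 0 ≤ B i) {v : ι → V → ℂ} (hv : IsTame σ B v) (M : ℕ) :
    ∃ (C : ℝ) (J : ℕ), 0 ≤ C ∧ ∀ i ξ, (1 + ‖ξ‖) ^ M * ‖𝓕 (v i) ξ‖ ≤ C * σ i ^ J * B i := by
  let q : Seminorm ℂ 𝓢(V, ℂ) :=
    ((Finset.Iic ((M, 0) : ℕ × ℕ)).sup (schwartzSeminormFamily ℂ V ℂ)).comp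
      (SchwartzMap.fourierTransformCLM ℂ (V := V) (E := ℂ)).toLinearMap
  have hq : Continuous q :=
    (((schwartz_withSeminorms ℂ V ℂ).finset_sups.continuous_seminorm _).comp
      (SchwartzMap.fourierTransformCLM ℂ (V := V) (E := ℂ)).continuous)
  obtain ⟨s, A, -, hA⟩ := Seminorm.bound_of_continuous (schwartz_withSeminorms ℂ V ℂ) q hq
  choose C J hC hCJ using hv.decay
  have hσ0 i : 0 ≤ σ i := zero_le_one.trans (hσ i)
  refine ⟨2 ^ M * (A * ∑ p ∈ s, C p.1 p.2), ∑ p ∈ s, J p.1 p.2,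
    by have := Finset.sum_nonneg fun p (_ : p ∈ s) => hC p.1 p.2; positivity, fun i ξ => ?_⟩
  obtain ⟨φ, hφ⟩ := hv.exists_schwartzMap i
  have h1 := SchwartzMap.one_add_le_sup_seminorm_apply (𝕜 := ℂ) (m := (M, 0)) le_rfl le_rfl (𝓕 φ) ξ
  rw [norm_iteratedFDeriv_zero, SchwartzMap.fourier_coe, hφ] at h1
  refine h1.trans ?_
  have h2 : q φ ≤ A * (s.sup (schwartzSeminormFamily ℂ V ℂ)) φ := hA φ
  have h3 : (s.sup (schwartzSeminormFamily ℂ V ℂ)) φ ≤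
      (∑ p ∈ s, C p.1 p.2) * σ i ^ (∑ p ∈ s, J p.1 p.2) * B i := by
    have hnn := Finset.sum_nonneg fun p (_ : p ∈ s) => hC p.1 p.2
    have := hσ0 i
    have := hB i
    refine Seminorm.finset_sup_apply_le (by positivity) fun p hp => ?_
    refine SchwartzMap.seminorm_le_bound ℂ p.1 p.2 φ (by positivity) fun x => ?_
    rw [hφ]
    refine (hCJ p.1 p.2 i x).trans ?_
    gcongr
    · exact Finset.single_le_sum (f := fun p : ℕ × ℕ => C p.1 p.2) (fun p _ => hC p.1 p.2) hp
    · exact hσ i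
    · exact Finset.single_le_sum (f := fun p : ℕ × ℕ => J p.1 p.2) (fun p _ => Nat.zero_le _) hp
  calc 2 ^ M * q φ ≤ 2 ^ M * (A * ((∑ p ∈ s, C p.1 p.2) * σ i ^ (∑ p ∈ s, J p.1 p.2) * B i)) := by
        gcongr
        exact h2.trans (by gcongr)
    _ = _ := by ring

lemma norm_iteratedFDeriv_cexp_mul_le {c : ℂ} (hc : ‖c‖ ≤ 1) (n : ℕ) (t : ℝ) :
    ‖iteratedFDeriv ℝ n (fun t : ℝ => Complex.exp (c * t)) t‖ ≤ ‖Complex.exp (c * t)‖ := by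
  have h : iteratedDeriv n (fun t : ℝ => Complex.exp (c * t)) =
      fun t : ℝ => c ^ n * Complex.exp (c * t) := by
    induction n with
    | zero => simp
    | succ n ih =>
      rw [iteratedDeriv_succ, ih]
      ext t
      have h1 : HasDerivAt (fun t : ℝ => c * (t : ℂ)) c t := by
        simpa using (Complex.ofRealCLM.hasDerivAt (x := t)).const_mul c
      rw [(h1.cexp.const_mul (c ^ n)).deriv]
      ring
  rw [norm_iteratedFDeriv_eq_norm_iteratedDeriv, h, norm_mul, norm_pow]
  exact mul_le_of_le_one_left (norm_nonneg _) (pow_le_one₀ (norm_nonneg _) hc)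

lemma contDiff_cexp_mul (c : ℂ) (s : ℝ) {ℓ : V → ℝ} (hℓ : ContDiff ℝ ∞ ℓ) :
    ContDiff ℝ ∞ fun x => Complex.exp (c * (s * ℓ x : ℝ)) :=
  (contDiff_const.mul (Complex.ofRealCLM.contDiff.comp (contDiff_const.mul hℓ))).cexp

lemma norm_iteratedFDeriv_cexp_comp_le {c : ℂ} (hc : ‖c‖ ≤ 1) {ℓ : V → ℝ} (hℓ : ContDiff ℝ ∞ ℓ)
    {n : ℕ} {x : V} {s D R : ℝ} (hs : |s| ≤ R) (hR : 1 ≤ R) (hD : 1 ≤ D)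
    (hDℓ : ∀ i ≤ n, ‖iteratedFDeriv ℝ i ℓ x‖ ≤ D) :
    ‖iteratedFDeriv ℝ n (fun x => Complex.exp (c * (s * ℓ x : ℝ))) x‖ ≤
      n.factorial * ‖Complex.exp (c * (s * ℓ x : ℝ))‖ * (R * D) ^ n := by
  have hexp : ContDiff ℝ ∞ fun t : ℝ => Complex.exp (c * t) :=
    (contDiff_const.mul Complex.ofRealCLM.contDiff).cexp
  refine norm_iteratedFDeriv_comp_le (g := fun t : ℝ => Complex.exp (c * t))
    (f := fun x => s * ℓ x) hexp (contDiff_const.mul hℓ) (by exact_mod_cast le_top) x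
    (fun i _ => norm_iteratedFDeriv_cexp_mul_le hc i _) fun i hi hin => ?_
  have h : iteratedFDeriv ℝ i (fun x => s * ℓ x) x = s • iteratedFDeriv ℝ i ℓ x :=
    iteratedFDeriv_const_smul_apply (a := s) (hℓ.of_le (by exact_mod_cast le_top)).contDiffAt
  rw [h, norm_smul, Real.norm_eq_abs]
  have h1 : 1 ≤ R * D := one_le_mul_of_one_le_of_one_le hR hD
  calc |s| * ‖iteratedFDeriv ℝ i ℓ x‖ ≤ R * D := by gcongr; exact hDℓ i hin
    _ ≤ (R * D) ^ i := le_self_pow₀ h1 (by omega)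

lemma isTame_cexp_smul {c : ℂ} (hc : ‖c‖ ≤ 1) {ℓ : V → ℝ} (hℓ : ContDiff ℝ ∞ ℓ) (ψ : 𝓢(V, W))
    (hbdd : ∀ j : ℕ, ∃ D, ∀ x ∈ tsupport ψ, ‖iteratedFDeriv ℝ j ℓ x‖ ≤ D)
    {s : ι → ℝ} (hσ : ∀ i, 1 ≤ σ i) (hB : ∀ i, 0 ≤ B i) (hs : ∀ i, |s i| ≤ σ i)
    (hexp : ∀ i, ∀ x ∈ tsupport ψ, ‖Complex.exp (c * (s i * ℓ x : ℝ))‖ ≤ B i) :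
    IsTame σ B fun i x => Complex.exp (c * (s i * ℓ x : ℝ)) • ψ x := by
  refine ⟨fun i => (contDiff_cexp_mul c (s i) hℓ).smul (ψ.smooth ⊤), fun k j => ?_⟩
  choose D hD using hbdd
  choose K hK0 hK using ψ.decay
  set A : ℝ := 1 + ∑ i ∈ Finset.range (j + 1), |D i|
  have hA1 : 1 ≤ A := le_add_of_nonneg_right (Finset.sum_nonneg fun i _ => abs_nonneg _)
  have hDA : ∀ m ≤ j, ∀ x ∈ tsupport ψ, ‖iteratedFDeriv ℝ m ℓ x‖ ≤ A := fun m hm x hx => by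
    have := Finset.single_le_sum (f := fun i => |D i|) (fun i _ => abs_nonneg _)
      (Finset.mem_range_succ_iff.2 hm)
    linarith [hD m x hx, le_abs_self (D m)]
  refine ⟨∑ m ∈ Finset.range (j + 1), j.choose m * (j.factorial * A ^ j) * K k (j - m), j,
    Finset.sum_nonneg fun m _ => by have := (hK0 k (j - m)).le; positivity, fun i x => ?_⟩
  have hσ0 : 0 ≤ σ i := zero_le_one.trans (hσ i)
  have hBi := hB i
  by_cases hx : x ∈ tsupport ψ
  swap
  · have h0 : iteratedFDeriv ℝ j (fun x => Complex.exp (c * (s i * ℓ x : ℝ)) • ψ x) x = 0 := by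
      by_contra h
      exact hx (tsupport_smul_subset_right _ _ (support_iteratedFDeriv_subset j h))
    rw [h0, norm_zero, mul_zero]
    have := Finset.sum_nonneg fun m (_ : m ∈ Finset.range (j + 1)) => show
      0 ≤ (j.choose m : ℝ) * (j.factorial * A ^ j) * K k (j - m) by
        have := (hK0 k (j - m)).le; positivity
    positivity
  have hleib := norm_iteratedFDeriv_smul_le (contDiff_cexp_mul c (s i) hℓ) (ψ.smooth ⊤) x (n := j)
    (by exact_mod_cast le_top)
  refine (mul_le_mul_of_nonneg_left hleib (by positivity)).trans ?_
  rw [Finset.mul_sum, Finset.sum_mul, Finset.sum_mul]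
  refine Finset.sum_le_sum fun m hm => ?_
  have hmj : m ≤ j := Finset.mem_range_succ_iff.1 hm
  have h1 : ‖iteratedFDeriv ℝ m (fun x => Complex.exp (c * (s i * ℓ x : ℝ))) x‖ ≤
      j.factorial * B i * (σ i * A) ^ j := by
    refine (norm_iteratedFDeriv_cexp_comp_le hc hℓ (hs i) (hσ i) hA1
      fun r hr => hDA r (hr.trans hmj) x hx).trans ?_
    gcongr
    · exact hexp i x hx
    · exact one_le_mul_of_one_le_of_one_le (hσ i) hA1
  calc ‖x‖ ^ k * (j.choose m * ‖iteratedFDeriv ℝ m (fun x => Complex.exp (c * (s i * ℓ x : ℝ))) x‖ *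
        ‖iteratedFDeriv ℝ (j - m) ψ x‖)
      = j.choose m * ‖iteratedFDeriv ℝ m (fun x => Complex.exp (c * (s i * ℓ x : ℝ))) x‖ *
        (‖x‖ ^ k * ‖iteratedFDeriv ℝ (j - m) ψ x‖) := by ring
    _ ≤ j.choose m * (j.factorial * B i * (σ i * A) ^ j) * K k (j - m) := by
        gcongr
        exact hK k (j - m) x
    _ = _ := by rw [mul_pow]; ring

/-- `e^{is u} - 1` for a real Schwartz function `u`, with polynomial control in `s`. -/
lemma isTame_cexp_sub_one (u : 𝓢(V, ℝ)) {s : ι → ℝ} (hσ : ∀ i, 1 ≤ σ i) (hs : ∀ i, |s i| ≤ σ i) :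
    IsTame σ (fun _ => 1) fun i x => Complex.exp (Complex.I * (s i * u x : ℝ)) - 1 := by
  have hsm i := contDiff_cexp_mul Complex.I (s i) (u.smooth ⊤)
  refine ⟨fun i => (hsm i).sub contDiff_const, fun k j => ?_⟩
  rcases j with _ | j
  · obtain ⟨K, hK0, hK⟩ := u.decay k 0
    refine ⟨K, 1, hK0.le, fun i x => ?_⟩
    rw [norm_iteratedFDeriv_zero]
    have h1 : ‖Complex.exp (Complex.I * (s i * u x : ℝ)) - 1‖ ≤ σ i * ‖u x‖ := by
      refine Real.norm_exp_I_mul_ofReal_sub_one_le.trans ?_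
      rw [norm_mul]
      gcongr
      exact hs i
    have h2 := hK x
    rw [norm_iteratedFDeriv_zero] at h2
    have hσ0 : 0 ≤ σ i := zero_le_one.trans (hσ i)
    calc ‖x‖ ^ k * ‖Complex.exp (Complex.I * (s i * u x : ℝ)) - 1‖
        ≤ ‖x‖ ^ k * (σ i * ‖u x‖) := by gcongr
      _ = (‖x‖ ^ k * ‖u x‖) * σ i := by ring
      _ ≤ K * σ i := by gcongr
      _ = _ := by ring
  · let U : 𝓢(V, ℂ) := u.postcompCLM Complex.ofRealCLM
    let ψ : 𝓢(V, V →L[ℝ] ℂ) := SchwartzMap.fderivCLM ℝ V ℂ U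
    have ht := isTame_cexp_smul (σ := σ) (B := fun _ => 1) (c := Complex.I) (by simp) (u.smooth ⊤) ψ
      (fun j => by
        obtain ⟨K, -, hK⟩ := u.decay 0 j
        exact ⟨K, fun x _ => by simpa using hK x⟩) hσ (fun _ => zero_le_one) hs
      (fun i x _ => by rw [mul_comm, Complex.norm_exp_ofReal_mul_I])
    obtain ⟨C, J, hC, hCJ⟩ := ht.decay k j
    refine ⟨C, J + 1, hC, fun i x => ?_⟩
    have hσ0 : 0 ≤ σ i := zero_le_one.trans (hσ i)
    have hfd : fderiv ℝ (fun x => Complex.exp (Complex.I * (s i * u x : ℝ)) - 1) =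
        (Complex.I * s i) • fun x => Complex.exp (Complex.I * (s i * u x : ℝ)) • ψ x := by
      ext1 x
      have h1 := (((U.differentiableAt (x := x)).hasFDerivAt.const_mul
        (Complex.I * s i)).cexp.sub_const 1)
      have h2 : (fun x => Complex.exp (Complex.I * (s i * u x : ℝ)) - 1) =
          fun x => Complex.exp (Complex.I * s i * U x) - 1 := by
        ext x
        simp [U, mul_assoc]
      rw [h2, h1.fderiv, Pi.smul_apply, smul_comm]
      simp [U, ψ, mul_assoc]
    rw [← norm_iteratedFDeriv_fderiv, hfd, iteratedFDeriv_const_smul_apply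
      ((ht.contDiff i).of_le (by exact_mod_cast le_top)).contDiffAt, norm_smul]
    have hn : ‖Complex.I * (s i : ℂ)‖ ≤ σ i := by simpa using hs i
    calc _ = ‖Complex.I * (s i : ℂ)‖ * (‖x‖ ^ k * ‖iteratedFDeriv ℝ j
            (fun x => Complex.exp (Complex.I * (s i * u x : ℝ)) • ψ x) x‖) := by ring
      _ ≤ σ i * (C * σ i ^ J * 1) := mul_le_mul hn (hCJ i x) (by positivity) hσ0
      _ = _ := by ring

end TameFamily

section FunctionalCalculus

variable {ι : Type*} {σ B : ι → ℝ}

/-- A tame family consists of transforms, with tame bounds on the total variations. -/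
lemma IsTame.isTransform (hσ : ∀ i, 1 ≤ σ i) (hB : ∀ i, 0 ≤ B i) {v : ι → 𝔼 → ℂ}
    (hv : IsTame σ B v) :
    ∃ (C : ℝ) (J : ℕ), 0 ≤ C ∧ ∀ i, IsTransform (v i) (C * σ i ^ J * B i) := by
  obtain ⟨C, J, hC, hCJ⟩ := hv.fourier_decay hσ hB (d + 1)
  have hint : Integrable fun ξ : 𝔼 => (1 + ‖ξ‖) ^ (-((d + 1 : ℕ) : ℝ)) :=
    integrable_one_add_norm (by simp)
  have hI : 0 ≤ ∫ ξ : 𝔼, (1 + ‖ξ‖) ^ (-((d + 1 : ℕ) : ℝ)) :=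
    integral_nonneg fun ξ => by positivity
  refine ⟨C * ∫ ξ : 𝔼, (1 + ‖ξ‖) ^ (-((d + 1 : ℕ) : ℝ)), J, by positivity, fun i => ?_⟩
  obtain ⟨φ, hφ⟩ := hv.exists_schwartzMap i
  have h1 := IsTransform.fourier (𝓕⁻ φ).integrable
  rw [← SchwartzMap.fourier_coe, FourierTransform.fourier_fourierInv_eq, hφ] at h1
  refine h1.mono ?_
  have h2 : ∫ x, ‖(𝓕⁻ φ) x‖ = ∫ x, ‖𝓕 (v i) x‖ := by
    rw [← integral_neg_eq_self]
    simp only [SchwartzMap.fourierInv_coe, Real.fourierInv_eq_fourier_neg, neg_neg, hφ]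
  rw [h2]
  calc ∫ x, ‖𝓕 (v i) x‖
      ≤ ∫ ξ : 𝔼, (C * σ i ^ J * B i) * (1 + ‖ξ‖) ^ (-((d + 1 : ℕ) : ℝ)) := by
        refine integral_mono_of_nonneg (.of_forall fun x => norm_nonneg _) (hint.const_mul _)
          (.of_forall fun x => ?_)
        have hx : 0 < 1 + ‖x‖ := by positivity
        beta_reduce
        rw [Real.rpow_neg hx.le, Real.rpow_natCast, ← div_eq_mul_inv, le_div_iff₀ (by positivity),
          mul_comm]
        exact hCJ i x
    _ = _ := by rw [integral_const_mul]; ring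

lemma summable_one_add_abs_inv_sq : Summable fun n : ℤ => ((1 + |(n : ℝ)|) ^ 2)⁻¹ := by
  have h : Summable fun n : ℤ => 1 / |(n : ℝ)| ^ 2 := by
    simpa using (Real.summable_one_div_int_pow (p := 2)).2 one_lt_two
  refine (h.add (summable_of_ne_finset_zero (s := {0})
    (f := fun n : ℤ => if n = 0 then (1 : ℝ) else 0) fun n hn => by simp_all)).of_nonneg_of_le
    (fun n => by positivity) fun n => ?_
  rcases eq_or_ne n 0 with rfl | hn
  · simp
  · have : 0 < |(n : ℝ)| := by positivity
    simp only [hn, if_false, add_zero, one_div]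
    gcongr
    linarith

/-- A real function whose exponentials `e^{2πinh}` are transforms of measures with polynomially
bounded total variation. -/
def PolyGrowth (h : EuclideanSpace ℝ (Fin d) → ℝ) : Prop :=
  ∃ (C : ℝ) (P : ℕ), 0 ≤ C ∧ ∀ n : ℤ,
    IsTransform (fun y => Complex.exp (2 * π * Complex.I * n * (h y : ℂ))) (C * (1 + |(n : ℝ)|) ^ P)

lemma PolyGrowth.zero : PolyGrowth fun _ : 𝔼 => 0 :=
  ⟨1, 0, zero_le_one, fun n => by simpa using IsTransform.one⟩

lemma PolyGrowth.add {h k : 𝔼 → ℝ} (hh : PolyGrowth h) (hk : PolyGrowth k) :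
    PolyGrowth fun y => h y + k y := by
  obtain ⟨C, P, hC, hCP⟩ := hh
  obtain ⟨D, Q, hD, hDQ⟩ := hk
  refine ⟨C * D, P + Q, by positivity, fun n => ?_⟩
  convert (hCP n).mul (hDQ n) using 1
  · ext y
    rw [← Complex.exp_add]
    push_cast
    ring_nf
  · ring

lemma PolyGrowth.sum {κ : Type*} {h : κ → 𝔼 → ℝ} (hh : ∀ k, PolyGrowth (h k)) (s : Finset κ) :
    PolyGrowth fun y => ∑ k ∈ s, h k y := by
  classical
  induction s using Finset.induction_on with
  | empty => simpa using PolyGrowth.zero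
  | insert k s hks ih => simpa only [Finset.sum_insert hks] using (hh k).add ih

/-- Smooth functional calculus: periodizations of tame families on the line act on functions of
polynomial growth, with tame bounds. -/
lemma PolyGrowth.isTransform_periodization {h : 𝔼 → ℝ} (hh : PolyGrowth h)
    (hσ : ∀ i, 1 ≤ σ i) (hB : ∀ i, 0 ≤ B i) {v : ι → ℝ → ℂ} (hv : IsTame σ B v) :
    ∃ (C : ℝ) (J : ℕ), 0 ≤ C ∧
      ∀ i, IsTransform (fun y => ∑' n : ℤ, v i (h y + n)) (C * σ i ^ J * B i) := by
  obtain ⟨D, P, hD, hDP⟩ := hh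
  obtain ⟨C, J, hC, hCJ⟩ := hv.fourier_decay hσ hB (P + 2)
  have hS : 0 ≤ ∑' n : ℤ, ((1 + |(n : ℝ)|) ^ 2)⁻¹ := tsum_nonneg fun n => by positivity
  refine ⟨C * D * ∑' n : ℤ, ((1 + |(n : ℝ)|) ^ 2)⁻¹, J, by positivity, fun i => ?_⟩
  obtain ⟨φ, hφ⟩ := hv.exists_schwartzMap i
  have hb (n : ℤ) : IsTransform
      (fun y => 𝓕 (v i) (n : ℝ) * Complex.exp (2 * π * Complex.I * n * (h y : ℂ)))
      (C * D * σ i ^ J * B i * ((1 + |(n : ℝ)|) ^ 2)⁻¹) := by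
    refine ((hDP n).const_mul _).mono ?_
    have hx : 0 < 1 + |(n : ℝ)| := by positivity
    rw [← div_eq_mul_inv, le_div_iff₀ (by positivity)]
    have := hCJ i n
    rw [Real.norm_eq_abs] at this
    calc _ = D * ((1 + |(n : ℝ)|) ^ (P + 2) * ‖𝓕 (v i) (n : ℝ)‖) := by ring
      _ ≤ D * (C * σ i ^ J * B i) := by gcongr
      _ = _ := by ring
  convert IsTransform.tsum_apply hb (summable_one_add_abs_inv_sq.mul_left _) using 1
  · ext y
    have := SchwartzMap.tsum_eq_tsum_fourier φ (h y)
    simp only [hφ, fourier_coe_apply, SchwartzMap.fourier_coe] at this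
    simpa using this
  · rw [tsum_mul_left]; ring

end FunctionalCalculus

section Approximation

lemma PolyGrowth.inner (γ : 𝔼) : PolyGrowth fun y : 𝔼 => ⟪γ, y⟫ := by
  refine ⟨1, 0, zero_le_one, fun n => ?_⟩
  convert IsTransform.char (-(n : ℝ) • γ) using 1
  · ext y
    rw [char, inner_smul_left]
    congr 1
    simp
    ring
  · simp

/-- An increment of the smooth transition function, whose integer translates sum to one. -/
noncomputable def unitBump (t : ℝ) : ℝ := smoothTransition (t + 1) - smoothTransition t

lemma unitBump_eq_zero {t : ℝ} (ht : t ≤ -1 ∨ 1 ≤ t) : unitBump t = 0 := by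
  rcases ht with h | h
  · rw [unitBump, smoothTransition.zero_of_nonpos (by linarith),
      smoothTransition.zero_of_nonpos (by linarith), sub_zero]
  · rw [unitBump, smoothTransition.one_of_one_le (by linarith),
      smoothTransition.one_of_one_le (by linarith), sub_self]

lemma contDiff_unitBump : ContDiff ℝ ∞ unitBump :=
  (smoothTransition.contDiff.comp (contDiff_id.add contDiff_const)).sub smoothTransition.contDiff

lemma hasCompactSupport_unitBump : HasCompactSupport unitBump :=
  HasCompactSupport.intro (isCompact_Icc (a := (-1 : ℝ)) (b := 1)) fun t ht =>
    unitBump_eq_zero (by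
      rw [Set.mem_Icc, not_and_or, not_le, not_le] at ht
      exact ht.imp le_of_lt le_of_lt)

lemma tsum_unitBump (t : ℝ) : ∑' n : ℤ, (unitBump (t + n) : ℂ) = 1 := by
  have h0 := Int.fract_nonneg t
  have h1 := Int.fract_lt_one t
  have ht (n : ℤ) : t + n = Int.fract t + (⌊t⌋ + n : ℤ) := by
    rw [Int.fract]; push_cast; ring
  rw [tsum_eq_sum (s := {-⌊t⌋, -⌊t⌋ - 1}) fun n hn => ?_, Finset.sum_pair (by omega), ht, ht]
  · have e1 : ⌊t⌋ + -⌊t⌋ = 0 := by ring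
    have e2 : ⌊t⌋ + (-⌊t⌋ - 1) = -1 := by ring
    rw [e1, e2, ← Complex.ofReal_add]
    norm_cast
    rw [unitBump, unitBump]
    push_cast
    rw [smoothTransition.one_of_one_le (x := Int.fract t + 0 + 1) (by linarith),
      smoothTransition.zero_of_nonpos (x := Int.fract t + -1) (by linarith)]
    ring_nf
  · rw [ht, unitBump_eq_zero, Complex.ofReal_zero]
    simp only [Finset.mem_insert, Finset.mem_singleton, not_or] at hn
    rcases (by omega : ⌊t⌋ + n ≤ -2 ∨ 1 ≤ ⌊t⌋ + n) with h | h
    · left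
      have : ((⌊t⌋ + n : ℤ) : ℝ) ≤ -2 := by exact_mod_cast h
      linarith
    · right
      have : (1 : ℝ) ≤ ((⌊t⌋ + n : ℤ) : ℝ) := by exact_mod_cast h
      linarith

lemma exists_bound_iteratedFDeriv {ℓ : ℝ → ℝ} (hℓ : ContDiff ℝ ∞ ℓ) {K : Set ℝ} (hK : IsCompact K)
    (j : ℕ) : ∃ D, ∀ x ∈ K, ‖iteratedFDeriv ℝ j ℓ x‖ ≤ D :=
  hK.exists_bound_of_continuousOn
    (hℓ.continuous_iteratedFDeriv (by exact_mod_cast le_top)).continuousOn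

lemma PolyGrowth.comp_periodic {h : 𝔼 → ℝ} (hh : PolyGrowth h) {ℓ : ℝ → ℝ} (hℓ : ContDiff ℝ ∞ ℓ)
    (hper : Function.Periodic ℓ 1) : PolyGrowth fun y => ℓ (h y) := by
  have hcs : HasCompactSupport fun t => (unitBump t : ℂ) :=
    hasCompactSupport_unitBump.comp_left Complex.ofReal_zero
  let ψ : 𝓢(ℝ, ℂ) := hcs.toSchwartzMap (Complex.ofRealCLM.contDiff.comp contDiff_unitBump)
  have hℓ' : ContDiff ℝ ∞ fun t => 2 * π * ℓ t := contDiff_const.mul hℓ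
  have hσ (n : ℤ) : 1 ≤ 1 + |(n : ℝ)| := le_add_of_nonneg_right (abs_nonneg _)
  have ht := isTame_cexp_smul (c := Complex.I) (by simp) hℓ' ψ
    (exists_bound_iteratedFDeriv hℓ' hcs) (s := fun n : ℤ => (n : ℝ)) hσ
    (B := fun _ => 1) (fun _ => zero_le_one) (fun n => le_add_of_nonneg_left zero_le_one)
    (fun i x _ => by rw [mul_comm, Complex.norm_exp_ofReal_mul_I])
  obtain ⟨C, J, hC, hCJ⟩ := hh.isTransform_periodization hσ (fun _ => zero_le_one) ht
  refine ⟨C, J, hC, fun n => ?_⟩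
  convert hCJ n using 1
  · ext y
    have hp (m : ℤ) : ℓ (h y + m) = ℓ (h y) := by simpa using hper.int_mul m (h y)
    have hψ (t : ℝ) : ψ t = unitBump t := rfl
    simp only [hp, smul_eq_mul, hψ, tsum_mul_left, tsum_unitBump, mul_one]
    congr 1
    push_cast
    ring
  · ring

lemma PolyGrowth.re_mul_char (c : ℂ) (γ : 𝔼) : PolyGrowth fun y : 𝔼 => (c * char γ y).re := by
  have hℓ : ContDiff ℝ ∞ fun t : ℝ => c.re * Real.cos (t * (2 * π)) +
      c.im * Real.sin (t * (2 * π)) := by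
    fun_prop
  convert (PolyGrowth.inner γ).comp_periodic hℓ fun t => ?_ using 2 with y
  · rw [char_eq_exp_mul_I, Complex.mul_re, Complex.exp_ofReal_mul_I_re,
      Complex.exp_ofReal_mul_I_im, show -2 * π * ⟪γ, y⟫ = -(⟪γ, y⟫ * (2 * π)) by ring,
      Real.cos_neg, Real.sin_neg]
    ring
  · simp [add_mul]

lemma PolyGrowth.re_schwartzMap (φ : 𝓢(𝔼, ℂ)) : PolyGrowth fun y : 𝔼 => (φ y).re := by
  let u : 𝓢(𝔼, ℝ) := φ.postcompCLM ((2 * π) • Complex.reCLM)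
  have hu y : u y = 2 * π * (φ y).re := rfl
  have hσ (n : ℤ) : 1 ≤ 1 + |(n : ℝ)| := le_add_of_nonneg_right (abs_nonneg _)
  obtain ⟨C, J, hC, hCJ⟩ := (isTame_cexp_sub_one u (s := fun n : ℤ => (n : ℝ)) hσ
    fun n => le_add_of_nonneg_left zero_le_one).isTransform hσ fun _ => zero_le_one
  refine ⟨C + 1, J, by positivity, fun n => ?_⟩
  convert ((hCJ n).add IsTransform.one).mono ?_ using 1
  · ext y
    rw [sub_add_cancel, hu]
    congr 1
    push_cast
    ring
  · nlinarith [one_le_pow₀ (hσ n) (n := J)]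

lemma exists_schwartzMap_integral_sub_le {f : 𝔼 → ℂ} (hf : Integrable f) {δ : ℝ} (hδ : 0 < δ) :
    ∃ φ : 𝓢(𝔼, ℂ), ∫ x, ‖f x - φ x‖ ≤ δ := by
  obtain ⟨g, hgc, hg, hgδ⟩ := (memLp_one_iff_integrable.2 hf).exist_eLpNorm_sub_le
    ENNReal.one_ne_top le_rfl hδ
  refine ⟨hgc.toSchwartzMap hg, ?_⟩
  have hi : Integrable fun x => f x - g x :=
    hf.sub (hg.continuous.integrable_of_hasCompactSupport hgc)
  rw [eLpNorm_one_eq_lintegral_enorm] at hgδ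
  change ∫ x, ‖f x - g x‖ ≤ δ
  rw [integral_norm_eq_lintegral_enorm hi.aestronglyMeasurable]
  exact ENNReal.toReal_le_of_le_ofReal hδ.le hgδ

/-- The real part of a transform is approximated by functions of polynomial growth. -/
lemma exists_polyGrowth_isTransform_sub {F : 𝔼 → ℂ} {C : ℝ} (hF : IsTransform F C) {δ : ℝ}
    (hδ : 0 < δ) :
    ∃ h : 𝔼 → ℝ, PolyGrowth h ∧ IsTransform (fun y => (((F y).re - h y : ℝ) : ℂ)) δ := by
  obtain ⟨f, a, γ, hf, ha, -, hy⟩ := hF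
  obtain ⟨φ, hφ⟩ := exists_schwartzMap_integral_sub_le hf (half_pos hδ)
  obtain ⟨N, hN⟩ := ((tendsto_sum_nat_add fun n => ‖a n‖).eventually_lt_const (half_pos hδ)).exists
  refine ⟨fun y => ((𝓕 φ) y).re + ∑ n ∈ Finset.range N, (a n * char (γ n) y).re,
    (PolyGrowth.re_schwartzMap _).add (PolyGrowth.sum (fun n => .re_mul_char (a n) (γ n)) _), ?_⟩
  have hr : IsTransform
      (measureFourier (fun x => f x - φ x) (fun n => a (n + N)) fun n => γ (n + N)) δ :=
    ⟨fun x => f x - φ x, _, _, hf.sub φ.integrable, (summable_nat_add_iff N).2 ha,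
      by linarith, fun y => rfl⟩
  convert hr.re using 3 with y
  have h1 : 𝓕 (fun x => f x - φ x) y = 𝓕 f y - (𝓕 φ) y := by
    rw [SchwartzMap.fourier_coe]
    simp only [fourier_eq_char, mul_sub]
    exact integral_sub (integrable_char_mul hf y) (integrable_char_mul φ.integrable y)
  rw [hy, measureFourier_eq, measureFourier_eq, h1,
    ← (summable_mul_char ha γ y).sum_add_tsum_nat_add N,
    Complex.add_re, Complex.add_re, Complex.add_re, Complex.sub_re, Complex.re_sum]
  ring

end Approximation

section Inversion

/-- A smooth function on the line that agrees with `log` on `[2β, ∞)`. -/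
lemma exists_contDiff_eq_log {β : ℝ} (hβ : 0 < β) :
    ∃ ℓ : ℝ → ℝ, ContDiff ℝ ∞ ℓ ∧ ∀ t, 2 * β ≤ t → ℓ t = Real.log t := by
  refine ⟨fun t => smoothTransition (t / β - 1) * Real.log t,
    contDiff_iff_contDiffAt.2 fun t => ?_, fun t ht => ?_⟩
  · have hS : ContDiff ℝ ∞ fun t : ℝ => smoothTransition (t / β - 1) :=
      smoothTransition.contDiff.comp ((contDiff_id.div_const β).sub contDiff_const)
    rcases lt_or_ge t β with h | h
    · refine (contDiffAt_const (c := (0 : ℝ))).congr_of_eventuallyEq ?_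
      filter_upwards [eventually_lt_nhds h] with x hx
      rw [smoothTransition.zero_of_nonpos, zero_mul]
      rw [sub_nonpos, div_le_one hβ]
      exact hx.le
    · exact hS.contDiffAt.mul (Real.contDiffAt_log.2 (hβ.trans_le h).ne')
  · beta_reduce
    rw [smoothTransition.one_of_one_le, one_mul]
    rw [le_sub_iff_add_le, le_div_iff₀ hβ]
    linarith

lemma cexp_neg_mul_log {t : ℝ} (ht : 0 < t) (k : ℕ) :
    Complex.exp (-1 * (((k : ℝ) + 1) * Real.log t : ℝ)) = ((t⁻¹ ^ (k + 1) : ℝ) : ℂ) := by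
  have : (-1 * (((k : ℝ) + 1) * Real.log t : ℝ) : ℂ) = (((k + 1 : ℕ) * Real.log t⁻¹ : ℝ) : ℂ) := by
    rw [Real.log_inv]
    push_cast
    ring
  rw [this, ← Complex.ofReal_exp, Real.exp_nat_mul, Real.exp_log (inv_pos.2 ht)]

/-- For `h` of polynomial growth with values in `[-α/16, 1/4 + α/16]`, smooth truncations of the
powers `h ^ (-(k + 1))` are transforms, with control of the total variation in `k`. -/
lemma PolyGrowth.exists_isTransform_inv_pow {h : 𝔼 → ℝ} (hh : PolyGrowth h) {α : ℝ} (hα : 0 < α)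
    (hα' : α ≤ 1 / 8) (hlow : ∀ y, -(α / 16) ≤ h y) (hup : ∀ y, h y ≤ 1 / 4 + α / 16) :
    ∃ (Φ : ℕ → 𝔼 → ℂ) (C : ℝ) (J : ℕ),
      (∀ k : ℕ, IsTransform (Φ k) (C * ((k : ℝ) + 1) ^ J * (16 / (5 * α)) ^ (k + 1))) ∧
      (∀ k y, 15 * α / 16 ≤ h y → Φ k y = (((h y)⁻¹ ^ (k + 1) : ℝ) : ℂ)) ∧
      ∀ k y, h y ≤ 5 * α / 16 → Φ k y = 0 := by
  let ψ₀ : ContDiffBump (1 / 4 : ℝ) :=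
    ⟨1 / 4 - 15 * α / 16, 1 / 4 - 5 * α / 16, by linarith, by linarith⟩
  have hψz t (ht : t ≤ 5 * α / 16 ∨ 1 / 2 - 5 * α / 16 ≤ t) : ψ₀ t = 0 := by
    refine ψ₀.zero_of_le_dist ?_
    rw [Real.dist_eq, le_abs]
    rcases ht with h | h
    · right; change 1 / 4 - 5 * α / 16 ≤ _; linarith
    · left; change 1 / 4 - 5 * α / 16 ≤ _; linarith
  have hcs : HasCompactSupport fun t => (ψ₀ t : ℂ) :=
    ψ₀.hasCompactSupport.comp_left Complex.ofReal_zero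
  let ψ : 𝓢(ℝ, ℂ) := hcs.toSchwartzMap (Complex.ofRealCLM.contDiff.comp ψ₀.contDiff)
  have hψ t : ψ t = ψ₀ t := rfl
  have hsupp : ∀ t ∈ tsupport ψ, 5 * α / 16 ≤ t := by
    refine closure_minimal (fun t ht => ?_) isClosed_Ici
    by_contra hn
    exact ht (by rw [hψ, hψz t (.inl (not_le.1 hn).le), Complex.ofReal_zero])
  obtain ⟨ℓ, hℓ, hlog⟩ := exists_contDiff_eq_log (show 0 < α / 16 by positivity)
  have hσ (k : ℕ) : 1 ≤ (k : ℝ) + 1 := le_add_of_nonneg_left k.cast_nonneg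
  have ht := isTame_cexp_smul (c := -1) (by simp) hℓ ψ
    (exists_bound_iteratedFDeriv hℓ hcs) (s := fun k : ℕ => (k : ℝ) + 1) hσ
    (B := fun k => (16 / (5 * α)) ^ (k + 1)) (fun k => by positivity)
    (fun k => (abs_of_nonneg (by positivity)).le) (fun k x hx => by
      have hx5 := hsupp x hx
      have hx0 : 0 < x := by linarith
      rw [hlog x (by linarith), cexp_neg_mul_log hx0, Complex.norm_real, Real.norm_eq_abs,
        abs_of_nonneg (by positivity)]
      gcongr
      rw [inv_le_comm₀ hx0 (by positivity), inv_div]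
      exact hx5)
  obtain ⟨C, J, -, hCJ⟩ := hh.isTransform_periodization hσ (fun k => by positivity) ht
  have hper k y : ∑' n : ℤ, Complex.exp (-1 * (((k : ℕ) + 1) * ℓ (h y + n) : ℝ)) • ψ (h y + n) =
      Complex.exp (-1 * (((k : ℕ) + 1) * ℓ (h y) : ℝ)) • ψ (h y) := by
    rw [tsum_eq_single 0 fun n hn => ?_]
    · simp
    · rw [hψ, hψz, Complex.ofReal_zero, smul_zero]
      have := hlow y
      have := hup y
      rcases (by omega : n ≤ -1 ∨ 1 ≤ n) with hn | hn
      · left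
        have : (n : ℝ) ≤ -1 := by exact_mod_cast hn
        linarith
      · right
        have : (1 : ℝ) ≤ n := by exact_mod_cast hn
        linarith
  simp only [hper] at hCJ
  refine ⟨_, C, J, hCJ, fun k y hy => ?_, fun k y hy => ?_⟩
  · rw [hlog _ (by linarith), cexp_neg_mul_log (by linarith), hψ, ψ₀.one_of_mem_closedBall]
    · simp
    · rw [mem_closedBall_iff_norm, Real.norm_eq_abs, abs_le]
      change -(1 / 4 - 15 * α / 16) ≤ _ ∧ _ ≤ 1 / 4 - 15 * α / 16
      have := hup y
      constructor <;> linarith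
  · rw [hψ, hψz _ (.inl hy), Complex.ofReal_zero, smul_zero]

lemma summable_add_one_pow_mul_geometric (J : ℕ) {r : ℝ} (h0 : 0 < r) (h1 : r < 1) :
    Summable fun k : ℕ => ((k : ℝ) + 1) ^ J * r ^ k := by
  have h := (summable_pow_mul_geometric_of_norm_lt_one J
    (show ‖r‖ < 1 by rwa [Real.norm_of_nonneg h0.le])).comp_injective (add_left_injective 1)
  refine (h.mul_right r⁻¹).congr fun k => ?_
  rw [Function.comp_apply, pow_succ]
  push_cast
  field_simp

/-- Local inversion of a real transform with values in `[0, 1/4]`. -/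
lemma exists_isTransform_inv {h : 𝔼 → ℝ} {C : ℝ} (hh : IsTransform (fun y => (h y : ℂ)) C)
    (h0 : ∀ y, 0 ≤ h y) (h1 : ∀ y, h y ≤ 1 / 4) {α : ℝ} (hα : 0 < α) (hα' : α ≤ 1 / 8) :
    ∃ (G : 𝔼 → ℂ) (D : ℝ), IsTransform G D ∧
      ∀ y, (α ≤ h y → G y = (h y : ℂ)⁻¹) ∧ (h y ≤ α / 4 → G y = 0) := by
  obtain ⟨h₀, hh₀, hr⟩ := exists_polyGrowth_isTransform_sub hh (show 0 < α / 16 by positivity)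
  simp only [Complex.ofReal_re] at hr
  have hclose y : |h y - h₀ y| ≤ α / 16 := by
    simpa only [Complex.norm_real, Real.norm_eq_abs] using hr.norm_le y
  have hc1 y := (abs_le.1 (hclose y)).1
  have hc2 y := (abs_le.1 (hclose y)).2
  obtain ⟨Φ, A, J, hΦ, hinv, hzero⟩ := hh₀.exists_isTransform_inv_pow hα hα'
    (fun y => by linarith [h0 y, hc2 y]) fun y => by linarith [h1 y, hc1 y]
  have hterm k := ((hr.const_mul (-1)).pow k).mul (hΦ k)
  refine ⟨_, _, IsTransform.tsum_apply hterm ?_, fun y => ⟨fun hy => ?_, fun hy => ?_⟩⟩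
  · refine ((summable_add_one_pow_mul_geometric J (show (0 : ℝ) < 1 / 5 by norm_num)
      (by norm_num)).mul_left (A * (16 / (5 * α)))).congr fun k => ?_
    have : α / 16 * (16 / (5 * α)) = 1 / 5 := by field_simp
    rw [norm_neg, norm_one, one_mul, ← this, mul_pow, pow_succ]
    ring
  · have hy₀ : 15 * α / 16 ≤ h₀ y := by linarith [hc2 y]
    have hpos : 0 < h₀ y := by linarith
    have hlt : ‖-(h y - h₀ y) / h₀ y‖ < 1 := by
      rw [norm_div, norm_neg, Real.norm_eq_abs, Real.norm_of_nonneg hpos.le, div_lt_one hpos]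
      linarith [hclose y]
    have hs := (hasSum_geometric_of_norm_lt_one hlt).mul_right (h₀ y)⁻¹
    have hs' := (Complex.hasSum_ofReal.2 hs).tsum_eq
    have hyne : h y ≠ 0 := by linarith
    have e : (1 - -(h y - h₀ y) / h₀ y)⁻¹ * (h₀ y)⁻¹ = (h y)⁻¹ := by
      rw [← mul_inv]
      congr 1
      field_simp
      ring
    rw [e, Complex.ofReal_inv] at hs'
    rw [← hs']
    refine tsum_congr fun k => ?_
    rw [hinv k y hy₀, div_pow, pow_succ]
    push_cast
    ring
  · simp only [hzero _ y (show h₀ y ≤ 5 * α / 16 by linarith [hc1 y]), mul_zero, tsum_zero]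

end Inversion

end FourierStieltjes

/-- **Local inversion of Fourier–Stieltjes transforms.** For every complex measure
`μ = f dx + Σ_n a_n δ_{γ_n}` on `ℝ^d` of finite total variation without singular component
and every `ε > 0` there is a measure `ν_ε = g dx + Σ_n b_n δ_{ρ_n}` of finite total variation
without singular component such that `ν̂_ε(y) = 1/μ̂(y)` whenever `|μ̂(y)| ≥ ε` and
`ν̂_ε(y) = 0` whenever `|μ̂(y)| ≤ ε/2`. -/
theorem wiener_local_inverse_measures {d : ℕ}
    (f : EuclideanSpace ℝ (Fin d) → ℂ) (hf : Integrable f)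
    (a : ℕ → ℂ) (ha : Summable fun n => ‖a n‖)
    (γ : ℕ → EuclideanSpace ℝ (Fin d))
    (ε : ℝ) (hε : 0 < ε) :
    ∃ (g : EuclideanSpace ℝ (Fin d) → ℂ) (b : ℕ → ℂ) (ρ : ℕ → EuclideanSpace ℝ (Fin d)),
      Integrable g ∧ Summable (fun n => ‖b n‖) ∧
      ∀ y : EuclideanSpace ℝ (Fin d),
        (ε ≤ ‖measureFourier f a γ y‖ →
          measureFourier g b ρ y = (measureFourier f a γ y)⁻¹) ∧
        (‖measureFourier f a γ y‖ ≤ ε / 2 → measureFourier g b ρ y = 0) := by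
  have hF : FourierStieltjes.IsTransform (measureFourier f a γ) _ :=
    ⟨f, a, γ, hf, ha, le_rfl, fun y => rfl⟩
  set F := measureFourier f a γ
  set C := (∫ x, ‖f x‖) + ∑' n, ‖a n‖
  have hC : 0 ≤ C := hF.nonneg
  set κ : ℝ := 1 / (8 * (C + ε) ^ 2) with hκ
  have hκ0 : 0 < κ := by positivity
  have hκC : κ * (C + ε) ^ 2 = 1 / 8 := by rw [hκ]; field_simp
  have hconj (y : EuclideanSpace ℝ (Fin d)) :
      ((κ * ‖F y‖ ^ 2 : ℝ) : ℂ) = κ * (F y * (starRingEnd ℂ) (F y)) := by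
    rw [Complex.mul_conj, Complex.normSq_eq_norm_sq]
    push_cast
    rfl
  have hh : FourierStieltjes.IsTransform (fun y => ((κ * ‖F y‖ ^ 2 : ℝ) : ℂ))
      (‖(κ : ℂ)‖ * (C * C)) := by
    simpa only [hconj] using (hF.mul hF.conj).const_mul κ
  obtain ⟨G, D, hG, hGy⟩ := FourierStieltjes.exists_isTransform_inv hh (fun y => by positivity)
    (fun y => by
      have : κ * ‖F y‖ ^ 2 ≤ κ * (C + ε) ^ 2 := by
        gcongr
        linarith [hF.norm_le y]
      linarith)
    (α := κ * ε ^ 2) (by positivity) (by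
      rw [← hκC]
      gcongr
      linarith)
  obtain ⟨g, b, ρ, hg, hb, -, hν⟩ := (hF.conj.mul hG).const_mul κ
  beta_reduce at hν
  refine ⟨g, b, ρ, hg, hb, fun y => ⟨fun hy => ?_, fun hy => ?_⟩⟩
  · have hne : F y ≠ 0 := norm_pos_iff.1 (hε.trans_le hy)
    have hne' : (starRingEnd ℂ) (F y) ≠ 0 := (map_ne_zero _).2 hne
    have hκ' : (κ : ℂ) ≠ 0 := Complex.ofReal_ne_zero.2 hκ0.ne'
    rw [← hν, (hGy y).1 (by gcongr), hconj]
    field_simp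
  · rw [← hν, (hGy y).2, mul_zero, mul_zero]
    have : κ * ‖F y‖ ^ 2 ≤ κ * (ε / 2) ^ 2 := by gcongr
    linarith
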